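/- Soundness of upper-bound pruning, condition (2) of Property 3: Let b ∈ A. If there exists a time t with smax b + p b ≤ t < smax b + p b + k b such that the sum of h a over all a ∈ A whose compulsory part contains t (smax a ≤ t < smin a + p a), plus h b, is strictly greater than C, then no consistent assignment σ with σ b = smax b satisfies the RCuSP constraint. -/

import Mathlib

/-!
At the failing time `t`, every activity whose compulsory part contains `t` runs under any
consistent `σ`, and `b`, started at `smax b`, has `t` in its slack window. Hence the robust load
of `σ` at `t` is at least the compulsory load plus `h b`, which exceeds `C`.
-/

section

variable {α T M : Type*} [Preorder T]

/-- Consistency of an assignment `σ` of start times with the domains `[smin a, smax a]`. -/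
def IsConsistent (A : Finset α) (smin smax σ : α → T) : Prop :=
  ∀ a ∈ A, smin a ≤ σ a ∧ σ a ≤ smax a

variable [Add T] [DecidableLE T] [DecidableLT T]

/-- The activities whose compulsory part, the half-open interval `[smax a, smin a + p a)`,
contains `t`. -/
def compulsoryActivities (A : Finset α) (p smin smax : α → T) (t : T) : Finset α :=
  A.filter fun a => smax a ≤ t ∧ t < smin a + p a

/-- The activities being executed at time `t` under the assignment `σ`. -/
def runningActivities (A : Finset α) (p σ : α → T) (t : T) : Finset α :=
  A.filter fun a => σ a ≤ t ∧ t < σ a + p a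

/-- The activities whose slack window under the assignment `σ`, the half-open interval of length
`k a` starting at the completion time `σ a + p a`, contains `t`. -/
def slackActivities (A : Finset α) (p k σ : α → T) (t : T) : Finset α :=
  A.filter fun a => σ a + p a ≤ t ∧ t < σ a + p a + k a

theorem compulsoryActivities_subset_runningActivities [AddRightMono T] {A : Finset α}
    {p smin smax σ : α → T} (hσ : IsConsistent A smin smax σ) (t : T) :
    compulsoryActivities A p smin smax t ⊆ runningActivities A p σ t := by
  refine Finset.monotone_filter_right A fun a ha ⟨hstart, hend⟩ => ?_
  obtain ⟨hmin, hmax⟩ := hσ a ha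
  exact ⟨hmax.trans hstart, hend.trans_le (add_le_add_left hmin (p a))⟩

variable [AddCommMonoid M] [SemilatticeSup M] [OrderBot M]

/-- The resource usage at time `t` under the assignment `σ` when the tallest activity whose slack
window contains `t` is delayed (at most one delay, that is, `r = 1`). The `sup` over an empty set
of such activities is `⊥`, which is `0` for canonically ordered heights. -/
def robustLoad (A : Finset α) (p : α → T) (h : α → M) (k σ : α → T) (t : T) : M :=
  (∑ a ∈ runningActivities A p σ t, h a) + (slackActivities A p k σ t).sup h

/-- The RCuSP constraint, i.e. RobustCumulative with `r = 1`, for capacity `C`. -/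
def RobustCumulative (A : Finset α) (p : α → T) (h : α → M) (k : α → T) (C : M) (σ : α → T) :
    Prop :=
  ∀ t, robustLoad A p h k σ t ≤ C

variable [AddRightMono T] [CanonicallyOrderedAdd M]
  {A : Finset α} {p k smin smax σ : α → T} {h : α → M} {b : α} {t : T}

theorem sum_compulsoryActivities_add_le_robustLoad (hσ : IsConsistent A smin smax σ)
    (hb : b ∈ slackActivities A p k σ t) :
    (∑ a ∈ compulsoryActivities A p smin smax t, h a) + h b ≤ robustLoad A p h k σ t :=
  add_le_add
    (Finset.sum_le_sum_of_subset (compulsoryActivities_subset_runningActivities hσ t))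
    (Finset.le_sup hb)

theorem rcusp_upper_bound_pruning_cond2_general {C : M} (hb : b ∈ A)
    (hfail : ∃ t, smax b + p b ≤ t ∧ t < smax b + p b + k b ∧
      C < (∑ a ∈ compulsoryActivities A p smin smax t, h a) + h b)
    (hσ : IsConsistent A smin smax σ) (hσb : σ b = smax b) :
    ¬ RobustCumulative A p h k C σ := by
  obtain ⟨t, hend, hslack, hC⟩ := hfail
  have hbt : b ∈ slackActivities A p k σ t :=
    Finset.mem_filter.mpr ⟨hb, hσb ▸ hend, hσb ▸ hslack⟩
  have hload : C < robustLoad A p h k σ t :=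
    hC.trans_le (sum_compulsoryActivities_add_le_robustLoad hσ hbt)
  exact fun hrc => hload.not_ge (hrc t)

end

/-- Soundness of upper-bound pruning, condition (2) of Property 3: if at some
time `t ∈ [smax b + p b, smax b + p b + k b)` the sum of the heights of the
activities whose compulsory part contains `t`, plus the height of `b`, exceeds
`C`, then no consistent assignment scheduling `b` at `smax b` satisfies the
RCuSP constraint. -/
theorem rcusp_upper_bound_pruning_cond2
    {α : Type*} (A : Finset α) (p h k smin smax : α → ℕ) (C : ℕ)
    (hp : ∀ a ∈ A, 0 < p a) (hh : ∀ a ∈ A, 0 < h a)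
    (hdom : ∀ a ∈ A, smin a ≤ smax a)
    (b : α) (hb : b ∈ A)
    (hfail : ∃ t : ℕ, smax b + p b ≤ t ∧ t < smax b + p b + k b ∧
      (∑ a ∈ A.filter (fun a => smax a ≤ t ∧ t < smin a + p a), h a) + h b > C) :
    ∀ σ : α → ℕ,
      (∀ a ∈ A, smin a ≤ σ a ∧ σ a ≤ smax a) →
      σ b = smax b →
      ¬ (∀ t : ℕ,
          (∑ a ∈ A.filter (fun a => σ a ≤ t ∧ t < σ a + p a), h a)
            + (A.filter (fun c => σ c + p c ≤ t ∧ t < σ c + p c + k c)).sup h ≤ C) :=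
  fun _ hσ hσb => rcusp_upper_bound_pruning_cond2_general hb hfail hσ hσb
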